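/- Let T be the (q+1)-regular tree with q ≥ 2, ∞ a fixed end, M the group of automorphisms of T fixing ∞ that have a fixed vertex (the 'centralizer' of the end), o a vertex on a geodesic ray toward ∞, with the ray's vertices o = v_0, v_1, v_2, … going toward ∞. For n ≥ 1 let M_n be the set of elements of M fixing v_n but not v_{n−1}, and M_0 the stabilizer of o in M. Then each M_n is a single M₀-double coset, M is the disjoint union of the M_n for n ≥ 0, M_n⁻¹ = M_n, and the number of left M₀-cosets in M_n equals (q−1)q^{n−1} for n ≥ 1. -/

import Mathlib

/-- A permutation of the vertices is an automorphism of the graph `G`. -/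
def IsAut {V : Type*} (G : SimpleGraph V) (g : Equiv.Perm V) : Prop :=
  ∀ a b : V, G.Adj (g a) (g b) ↔ G.Adj a b

/-- The centralizer `M` of the end `∞` determined by the ray `v 0, v 1, v 2, …`:
automorphisms fixing the end and having a fixed vertex; equivalently, automorphisms
fixing all but finitely many vertices of the ray. -/
def Mend {V : Type*} (G : SimpleGraph V) (v : ℕ → V) : Set (Equiv.Perm V) :=
  {g | IsAut G g ∧ ∃ N : ℕ, ∀ n : ℕ, N ≤ n → g (v n) = v n}

/-- `Mset G v 0` is the stabilizer `M₀` of `o = v 0` in `M`; for `n ≥ 1`, `Mset G v n`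
is the set of elements of `M` fixing `v n` but not `v (n-1)`. -/
def Mset {V : Type*} (G : SimpleGraph V) (v : ℕ → V) : ℕ → Set (Equiv.Perm V)
  | 0 => {g | g ∈ Mend G v ∧ g (v 0) = v 0}
  | n + 1 => {g | g ∈ Mend G v ∧ g (v (n + 1)) = v (n + 1) ∧ g (v n) ≠ v n}

namespace Aux18

theorem closer_unique {V : Type*} {G : SimpleGraph V} (hconn : G.Connected) (hac : G.IsAcyclic)
    {r u w w' : V} (h : G.Adj u w) (h' : G.Adj u w')
    (hd : G.dist u r = G.dist w r + 1) (hd' : G.dist u r = G.dist w' r + 1) : w = w' := by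
  obtain ⟨P, hP⟩ := hconn.exists_walk_length_eq_dist w r
  obtain ⟨P', hP'⟩ := hconn.exists_walk_length_eq_dist w' r
  have h1 : (SimpleGraph.Walk.cons h P).IsPath :=
    SimpleGraph.Walk.isPath_of_length_eq_dist _ (by simp [hP, hd])
  have h2 : (SimpleGraph.Walk.cons h' P').IsPath :=
    SimpleGraph.Walk.isPath_of_length_eq_dist _ (by simp [hP', hd'])
  have h3 := (hac.subsingleton_path u r).elim ⟨_, h1⟩ ⟨_, h2⟩
  have h4 := congrArg (fun x : G.Path u r => x.1.snd) h3
  simpa using h4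

theorem dist_step {V : Type*} {G : SimpleGraph V} (hconn : G.Connected) (hac : G.IsAcyclic)
    {u w : V} (r : V) (h : G.Adj u w) :
    G.dist u r = G.dist w r + 1 ∨ G.dist w r = G.dist u r + 1 := by
  have := SimpleGraph.IsTree.dist_eq_dist_add_one_of_adj ⟨hconn, hac⟩ r h
  rw [G.dist_comm (u := r), G.dist_comm (u := r)] at this
  tauto

theorem ray_dist {V : Type*} {G : SimpleGraph V} {v : ℕ → V}
    (hconn : G.Connected) (hac : G.IsAcyclic)
    (hinj : Function.Injective v) (hadj : ∀ n : ℕ, G.Adj (v n) (v (n + 1))) (m : ℕ) :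
    ∀ n : ℕ, G.dist (v (m + n)) (v m) = n ∧ G.dist (v (m + n + 1)) (v m) = n + 1 := by
  intro n
  induction n with
  | zero => simpa [SimpleGraph.dist_eq_one_iff_adj] using (hadj m).symm
  | succ n ih =>
    refine ⟨ih.2, ?_⟩
    rcases dist_step hconn hac (v m) (hadj (m + n + 1)) with h | h
    · exfalso
      have := closer_unique hconn hac (hadj (m+n+1)) (hadj (m+n)).symm h (by omega)
      have := hinj this
      omega
    · rw [ih.2] at h
      exact h

theorem dist_aut {V : Type*} {G : SimpleGraph V} {g : Equiv.Perm V}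
    (hg : IsAut G g) (a b : V) (hconn : G.Connected) : G.dist (g a) (g b) = G.dist a b := by
  have key : ∀ (g : Equiv.Perm V), IsAut G g → ∀ a b, G.dist (g a) (g b) ≤ G.dist a b := by
    intro g hg a b
    obtain ⟨P, hP⟩ := hconn.exists_walk_length_eq_dist a b
    let f : G →g G := ⟨g, fun {x y} h => (hg x y).2 h⟩
    have := SimpleGraph.dist_le (P.map f)
    simpa [hP, f] using this
  apply le_antisymm (key g hg a b)
  have h2 : IsAut G g⁻¹ := by
    intro x y
    have := hg (g⁻¹ x) (g⁻¹ y)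
    simpa using this.symm
  simpa using key g⁻¹ h2 (g a) (g b)

/-- The parent map and height function of a tree with a distinguished end. -/
theorem exists_parent {V : Type*} (G : SimpleGraph V) (v : ℕ → V)
    (hconn : G.Connected) (hac : G.IsAcyclic)
    (hinj : Function.Injective v) (hadj : ∀ n : ℕ, G.Adj (v n) (v (n + 1))) :
    ∃ (p : V → V) (h : V → ℤ), (∀ u, h (p u) = h u + 1) ∧
      (∀ a b, G.Adj a b ↔ p a = b ∨ p b = a) ∧ (∀ n, p (v n) = v (n + 1)) ∧
      (∀ g ∈ Mend G v, ∀ u, g (p u) = p (g u)) := by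
  have ex : ∀ u, ∃ c : ℤ, ∃ N : ℕ, ∀ n : ℕ, N ≤ n → (n : ℤ) - G.dist u (v n) = c := by
    intro u
    let f : ℕ → ℕ := fun n => G.dist u (v n) + G.dist u (v 0) - n
    have hb : ∀ n, n ≤ G.dist u (v n) + G.dist u (v 0) := by
      intro n
      have h1 := (ray_dist hconn hac hinj hadj 0 n).1
      have h2 := hconn.dist_triangle (u := v n) (v := u) (w := v 0)
      rw [G.dist_comm (u := v n) (v := u)] at h2
      simp only [zero_add] at h1
      omega
    have hf : Antitone f := by
      apply antitone_nat_of_succ_le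
      intro n
      have h2 := hconn.dist_triangle (u := u) (v := v n) (w := v (n+1))
      have h3 := SimpleGraph.dist_eq_one_iff_adj.2 (hadj n)
      have := hb n
      have := hb (n+1)
      simp only [f]
      omega
    obtain ⟨N, hN⟩ := WellFoundedLT.antitone_chain_condition hf
    refine ⟨(N : ℤ) - G.dist u (v N), N, fun n hn => ?_⟩
    have := hN n hn
    have := hb n
    have := hb N
    simp only [f] at *
    omega
  choose h N hN using ex
  have hun : ∀ u w w', G.Adj u w → G.Adj u w' → h w = h u + 1 → h w' = h u + 1 → w = w' := by
    intro u w w' a a' e e'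
    have h1 := hN u (N u + N w + N w') (by omega)
    have h2 := hN w (N u + N w + N w') (by omega)
    have h3 := hN w' (N u + N w + N w') (by omega)
    exact closer_unique (r := v (N u + N w + N w')) hconn hac a a' (by omega) (by omega)
  have hst : ∀ u w, G.Adj u w → h w = h u + 1 ∨ h u = h w + 1 := by
    intro u w a
    have h1 := hN u (N u + N w) (by omega)
    have h2 := hN w (N u + N w) (by omega)
    have := dist_step hconn hac (v (N u + N w)) a
    omega
  have hex : ∀ u, ∃ w, G.Adj u w ∧ h w = h u + 1 := by
    intro u
    obtain ⟨M, hM, hne⟩ : ∃ M, N u ≤ M ∧ u ≠ v M := by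
      by_cases e : u = v (N u)
      · refine ⟨N u + 1, by omega, fun e' => ?_⟩
        have := hinj (e.symm.trans e')
        omega
      · exact ⟨N u, le_rfl, e⟩
    obtain ⟨P, hP⟩ := hconn.exists_walk_length_eq_dist u (v M)
    cases P with
    | nil => exact absurd rfl hne
    | @cons _ w _ a P =>
      refine ⟨w, a, ?_⟩
      rcases hst u w a with e | e
      · exact e
      · exfalso
        simp only [SimpleGraph.Walk.length_cons] at hP
        have h1 := SimpleGraph.dist_le P
        have h2 := hN u M hM
        have h3 := hN w (M + N w) (by omega)
        have h4 := hconn.dist_triangle (u := w) (v := v M) (w := v (M + N w))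
        have h5 := (ray_dist hconn hac hinj hadj M (N w)).1
        rw [G.dist_comm] at h5
        omega
  choose p hp1 hp2 using hex
  refine ⟨p, h, hp2, ?_, ?_, ?_⟩
  · intro a b
    constructor
    · intro ab
      rcases hst a b ab with e | e
      · exact Or.inl (hun a _ _ (hp1 a) ab (hp2 a) e)
      · exact Or.inr (hun b _ _ (hp1 b) ab.symm (hp2 b) e)
    · rintro (rfl | rfl)
      · exact hp1 a
      · exact (hp1 b).symm
  · intro n
    have hv : ∀ n, h (v n) = n := by
      intro n
      have h1 := hN (v n) (n + N (v n)) (by omega)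
      have h5 := (ray_dist hconn hac hinj hadj n (N (v n))).1
      rw [G.dist_comm] at h5
      omega
    exact hun (v n) _ _ (hp1 _) (hadj n) (hp2 _) (by simp [hv])
  · rintro g ⟨hg, K, hK⟩ u
    have hh : ∀ u, h (g u) = h u := by
      intro u
      have h1 := hN u (N u + N (g u) + K) (by omega)
      have h2 := hN (g u) (N u + N (g u) + K) (by omega)
      have h3 := dist_aut hg u (v (N u + N (g u) + K)) hconn
      rw [hK _ (by omega)] at h3
      omega
    exact hun (g u) _ _ ((hg _ _).2 (hp1 u)) (hp1 _) (by rw [hh, hh, hp2]) (hp2 _)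

/-- Copy the descent path of `u` (of length `k`) to a descent path from `y`. -/
def phi {V : Type*} {q : ℕ} (p : V → V) (ch : V → Fin q → V) (l : V → Fin q) (y : V) :
    ℕ → V → V
  | 0, _ => y
  | k + 1, u => ch (phi p ch l y k (p u)) (l u)

theorem iter_phi {V : Type*} {q : ℕ} {p : V → V} {ch : V → Fin q → V} {l : V → Fin q}
    (hch : ∀ u i, p (ch u i) = u) (y : V) :
    ∀ k u, p^[k] (phi p ch l y k u) = y := by
  intro k
  induction k with
  | zero => intro u; rfl
  | succ k ih => intro u; rw [Function.iterate_succ_apply, phi, hch, ih]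

theorem phi_phi {V : Type*} {q : ℕ} {p : V → V} {ch : V → Fin q → V} {l : V → Fin q}
    (hch : ∀ u i, p (ch u i) = u) (hl : ∀ u i, l (ch u i) = i) (hc : ∀ w, ch (p w) (l w) = w)
    (x y : V) :
    ∀ k u, p^[k] u = x → phi p ch l x k (phi p ch l y k u) = u := by
  intro k
  induction k with
  | zero => intro u hu; exact hu.symm
  | succ k ih =>
    intro u hu
    rw [Function.iterate_succ_apply] at hu
    simp only [phi, hch, hl, ih _ hu, hc]

theorem iter_height {V : Type*} {p : V → V} {h : V → ℤ} (hh : ∀ u, h (p u) = h u + 1) :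
    ∀ (k : ℕ) u, h (p^[k] u) = h u + k := by
  intro k
  induction k with
  | zero => simp
  | succ k ih => intro u; rw [Function.iterate_succ_apply', hh, ih]; push_cast; ring

theorem exists_swap {V : Type*} {q : ℕ} {p : V → V} {ch : V → Fin q → V} {l : V → Fin q}
    {h : V → ℤ} (hh : ∀ u, h (p u) = h u + 1)
    (hch : ∀ u i, p (ch u i) = u) (hl : ∀ u i, l (ch u i) = i) (hc : ∀ w, ch (p w) (l w) = w)
    (x y : V) (hxy : p x = p y) :
    ∃ σ : Equiv.Perm V, (∀ u, σ (p u) = p (σ u)) ∧ σ x = y ∧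
      ∀ u, (∀ k, p^[k] u ≠ x) → (∀ k, p^[k] u ≠ y) → σ u = u := by
  classical
  by_cases hne : x = y
  · exact ⟨1, by simp, by simp [hne], by simp⟩
  have hhxy : h x = h y := by
    have := congrArg h hxy
    rw [hh, hh] at this
    omega
  have huniq : ∀ u (j k : ℕ), h (p^[j] u) = h (p^[k] u) → j = k := by
    intro u j k e
    rw [iter_height hh, iter_height hh] at e
    omega
  let f : V → V := fun u =>
    if hx : ∃ k, p^[k] u = x then phi p ch l y hx.choose u
    else if hy : ∃ k, p^[k] u = y then phi p ch l x hy.choose u else u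
  have fx : ∀ u k, p^[k] u = x → f u = phi p ch l y k u := by
    intro u k e
    have hx : ∃ k, p^[k] u = x := ⟨k, e⟩
    have := huniq u hx.choose k (by rw [hx.choose_spec, e])
    simp only [f, dif_pos hx, this]
  have fy : ∀ u k, p^[k] u = y → f u = phi p ch l x k u := by
    intro u k e
    have hx : ¬ ∃ k, p^[k] u = x := by
      rintro ⟨j, ej⟩
      have := huniq u j k (by rw [ej, e, hhxy])
      subst this
      exact hne (ej.symm.trans e)
    have hy : ∃ k, p^[k] u = y := ⟨k, e⟩
    have := huniq u hy.choose k (by rw [hy.choose_spec, e])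
    simp only [f, dif_neg hx, dif_pos hy, this]
  have fn : ∀ u, (∀ k, p^[k] u ≠ x) → (∀ k, p^[k] u ≠ y) → f u = u := by
    intro u h1 h2
    have hx : ¬ ∃ k, p^[k] u = x := by rintro ⟨k, e⟩; exact h1 k e
    have hy : ¬ ∃ k, p^[k] u = y := by rintro ⟨k, e⟩; exact h2 k e
    simp only [f, dif_neg hx, dif_neg hy]
  have cases3 : ∀ u, (∃ k, p^[k] u = x) ∨ (∃ k, p^[k] u = y) ∨
      ((∀ k, p^[k] u ≠ x) ∧ (∀ k, p^[k] u ≠ y)) := by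
    intro u
    by_cases h1 : ∃ k, p^[k] u = x
    · exact Or.inl h1
    · by_cases h2 : ∃ k, p^[k] u = y
      · exact Or.inr (Or.inl h2)
      · push Not at h1 h2
        exact Or.inr (Or.inr ⟨h1, h2⟩)
  have finv : Function.Involutive f := by
    intro u
    rcases cases3 u with ⟨k, e⟩ | ⟨k, e⟩ | ⟨h1, h2⟩
    · rw [fx u k e, fy _ k (iter_phi hch y k u)]
      exact phi_phi hch hl hc x y k u e
    · rw [fy u k e, fx _ k (iter_phi hch x k u)]
      exact phi_phi hch hl hc y x k u e
    · rw [fn u h1 h2, fn u h1 h2]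
  have fpx : f (p x) = p x := by
    apply fn
    · intro k e
      have := congrArg h e
      rw [iter_height hh, hh] at this
      omega
    · intro k e
      have := congrArg h e
      rw [iter_height hh, hh] at this
      omega
  refine ⟨finv.toPerm f, ?_, ?_, ?_⟩
  · intro u
    change f (p u) = p (f u)
    rcases cases3 u with ⟨k, e⟩ | ⟨k, e⟩ | ⟨h1, h2⟩
    · cases k with
      | zero =>
        have e' : u = x := e
        rw [e', fpx, fx x 0 rfl, phi, hxy]
      | succ k =>
        rw [fx u _ e, phi, hch]
        exact fx _ k e
    · cases k with
      | zero =>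
        have e' : u = y := e
        rw [e', ← hxy, fpx, fy y 0 rfl, phi]
      | succ k =>
        rw [fy u _ e, phi, hch]
        exact fy _ k e
    · rw [fn u h1 h2]
      exact fn _ (fun k => h1 (k + 1)) (fun k => h2 (k + 1))
  · exact fx x 0 rfl
  · exact fn

theorem comm_iter {V : Type*} {p : V → V} {g : Equiv.Perm V} (hg : ∀ u, g (p u) = p (g u)) :
    ∀ (k : ℕ) u, g (p^[k] u) = p^[k] (g u) := by
  intro k
  induction k with
  | zero => intro u; rfl
  | succ k ih => intro u; rw [Function.iterate_succ_apply, ih, hg, Function.iterate_succ_apply]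

theorem exists_transport {V : Type*} {q : ℕ} {p : V → V} {ch : V → Fin q → V} {l : V → Fin q}
    {h : V → ℤ} (hh : ∀ u, h (p u) = h u + 1)
    (hch : ∀ u i, p (ch u i) = u) (hl : ∀ u i, l (ch u i) = i) (hc : ∀ w, ch (p w) (l w) = w) :
    ∀ (k : ℕ) (w w' : V), p^[k] w = p^[k] w' →
    ∃ a : Equiv.Perm V, (∀ u, a (p u) = p (a u)) ∧ a w = w' ∧
      ∀ u, (∀ j, p^[j + 1] u ≠ p^[k] w') → a u = u := by
  intro k
  induction k with
  | zero => intro w w' e; exact ⟨1, by simp, e, by simp⟩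
  | succ k ih =>
    intro w w' e
    rw [Function.iterate_succ_apply', Function.iterate_succ_apply'] at e
    obtain ⟨σ, s1, s2, s3⟩ := exists_swap hh hch hl hc _ _ e
    obtain ⟨a, a1, a2, a3⟩ := ih (σ w) w' (by rw [← comm_iter s1, s2])
    refine ⟨a * σ, ?_, ?_, ?_⟩
    · intro u
      simp [s1, a1]
    · simpa using a2
    · intro u hu
      have h1 : σ u = u := by
        apply s3
        · intro j hj
          apply hu j
          rw [Function.iterate_succ_apply', hj, Function.iterate_succ_apply', e]
        · intro j hj
          apply hu j
          rw [Function.iterate_succ_apply', hj, Function.iterate_succ_apply']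
      rw [Equiv.Perm.mul_apply, h1]
      apply a3
      intro j hj
      apply hu (j + 1)
      rw [Function.iterate_succ_apply', hj, Function.iterate_succ_apply']

theorem card_desc {V : Type*} {q : ℕ} {p : V → V} {ch : V → Fin q → V} {l : V → Fin q}
    (hch : ∀ u i, p (ch u i) = u) (hl : ∀ u i, l (ch u i) = i) (hc : ∀ w, ch (p w) (l w) = w)
    (z : V) : ∀ k : ℕ, {w | p^[k] w = z}.Finite ∧ {w | p^[k] w = z}.ncard = q ^ k := by
  intro k
  induction k with
  | zero => simp
  | succ k ih =>
    have e : {w | p^[k + 1] w = z} =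
        (fun x : V × Fin q => ch x.1 x.2) '' ({w | p^[k] w = z} ×ˢ Set.univ) := by
      ext w
      simp only [Set.mem_setOf_eq, Set.mem_image, Set.mem_prod, Set.mem_univ, and_true]
      constructor
      · intro hw
        exact ⟨(p w, l w), hw, hc w⟩
      · rintro ⟨x, hx, rfl⟩
        rw [Function.iterate_succ_apply, hch, hx]
    rw [e]
    refine ⟨(ih.1.prod Set.finite_univ).image _, ?_⟩
    rw [Set.ncard_image_of_injective, Set.ncard_prod, ih.2]
    · simp [pow_succ]
    · rintro ⟨a, i⟩ ⟨b, j⟩ hab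
      have h1 := congrArg p hab
      have h2 := congrArg l hab
      simp only [hch, hl] at h1 h2
      rw [h1, h2]

theorem exists_labels {V : Type*} {q : ℕ} {p : V → V} (hq : 2 ≤ q)
    (hf : ∀ u, {w | p w = u}.ncard = q) :
    ∃ (ch : V → Fin q → V) (l : V → Fin q), (∀ u i, p (ch u i) = u) ∧
      (∀ u i, l (ch u i) = i) ∧ (∀ w, ch (p w) (l w) = w) := by
  have ex : ∀ u, Nonempty ({w | p w = u} ≃ Fin q) := by
    intro u
    haveI : Finite {w | p w = u} := Set.finite_of_ncard_pos (by rw [hf]; omega)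
    exact ⟨Finite.equivFinOfCardEq (hf u)⟩
  let e := fun u => (ex u).some
  have key : ∀ (u w : V) (hw : p w = u), e (p w) ⟨w, rfl⟩ = e u ⟨w, hw⟩ := by
    rintro u w rfl; rfl
  refine ⟨fun u i => ((e u).symm i).1, fun w => e (p w) ⟨w, rfl⟩, ?_, ?_, ?_⟩
  · intro u i
    exact ((e u).symm i).2
  · intro u i
    refine (key u _ ((e u).symm i).2).trans ?_
    simp
  · intro w
    simp

theorem main {V : Type*} (G : SimpleGraph V) (v : ℕ → V) (q : ℕ) (hq : 2 ≤ q)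
    (hinj : Function.Injective v)
    (p : V → V) (h : V → ℤ) (ch : V → Fin q → V) (l : V → Fin q)
    (hh : ∀ u, h (p u) = h u + 1)
    (hch : ∀ u i, p (ch u i) = u) (hl : ∀ u i, l (ch u i) = i) (hc : ∀ w, ch (p w) (l w) = w)
    (hv : ∀ n, p (v n) = v (n + 1))
    (hM : ∀ g, g ∈ Mend G v ↔ (∀ u, g (p u) = p (g u)) ∧ ∃ n, g (v n) = v n) :
    (∀ g ∈ Mend G v, ∃! n : ℕ, g ∈ Mset G v n) ∧
    (∀ n : ℕ, ∀ g ∈ Mset G v n, ∀ g' ∈ Mset G v n,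
      ∃ a ∈ Mset G v 0, ∃ b ∈ Mset G v 0, g' = a * g * b) ∧
    (∀ n : ℕ, (Mset G v n)⁻¹ = Mset G v n) ∧
    (∀ n : ℕ, 1 ≤ n →
      Nat.card ↥{s : Set (Equiv.Perm V) | ∃ g ∈ Mset G v n, s = (g * ·) '' Mset G v 0} =
        (q - 1) * q ^ (n - 1)) := by
  have hvk : ∀ k, p^[k] (v 0) = v k := by
    intro k
    induction k with
    | zero => rfl
    | succ k ih => rw [Function.iterate_succ_apply', ih, hv]
  have up : ∀ g : Equiv.Perm V, (∀ u, g (p u) = p (g u)) → ∀ n m, n ≤ m →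
      g (v n) = v n → g (v m) = v m := by
    intro g hg n m hnm e
    induction m, hnm using Nat.le_induction with
    | base => exact e
    | succ m _ ih => rw [← hv, hg, ih]
  have hmul : ∀ a ∈ Mend G v, ∀ b ∈ Mend G v, a * b ∈ Mend G v := by
    intro a ha b hb
    rw [hM] at ha hb ⊢
    obtain ⟨a1, n, a2⟩ := ha
    obtain ⟨b1, m, b2⟩ := hb
    refine ⟨fun u => by simp [a1, b1], n + m, ?_⟩
    rw [Equiv.Perm.mul_apply, up b b1 m _ (by omega) b2, up a a1 n _ (by omega) a2]
  have hinv : ∀ a ∈ Mend G v, a⁻¹ ∈ Mend G v := by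
    intro a ha
    rw [hM] at ha ⊢
    obtain ⟨a1, n, a2⟩ := ha
    refine ⟨fun u => ?_, n, ?_⟩
    · rw [Equiv.Perm.inv_eq_iff_eq, a1]; simp
    · rw [Equiv.Perm.inv_eq_iff_eq, a2]
  have hM0 : ∀ a, a ∈ Mset G v 0 ↔ (∀ u, a (p u) = p (a u)) ∧ a (v 0) = v 0 := by
    intro a
    change (a ∈ Mend G v ∧ a (v 0) = v 0) ↔ _
    rw [hM]
    exact ⟨fun ⟨x, y⟩ => ⟨x.1, y⟩, fun ⟨x, y⟩ => ⟨⟨x, 0, y⟩, y⟩⟩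
  have hMn : ∀ n a, a ∈ Mset G v (n + 1) ↔ (∀ u, a (p u) = p (a u)) ∧
      p^[n + 1] (a (v 0)) = v (n + 1) ∧ p^[n] (a (v 0)) ≠ v n := by
    intro n a
    change (a ∈ Mend G v ∧ a (v (n + 1)) = v (n + 1) ∧ a (v n) ≠ v n) ↔ _
    rw [hM]
    constructor
    · rintro ⟨⟨x, -⟩, y, z⟩
      refine ⟨x, ?_⟩
      rw [← comm_iter x, ← comm_iter x, hvk, hvk]
      exact ⟨y, z⟩
    · rintro ⟨x, y⟩
      rw [← comm_iter x, ← comm_iter x, hvk, hvk] at y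
      exact ⟨⟨x, _, y.1⟩, y⟩
  have hsub : ∀ n, ∀ a ∈ Mset G v n, a ∈ Mend G v := by
    intro n a ha
    cases n with
    | zero => exact ha.1
    | succ n => exact ha.1
  have same : ∀ g ∈ Mend G v, ∀ g' ∈ Mend G v, g (v 0) = g' (v 0) → g⁻¹ * g' ∈ Mset G v 0 := by
    intro g hg g' hg' e
    refine ⟨hmul _ (hinv _ hg) _ hg', ?_⟩
    rw [Equiv.Perm.mul_apply, ← e]; simp
  have E1 : ∀ n w w', p^[n + 1] w = v (n + 1) → p^[n] w ≠ v n → p^[n + 1] w' = v (n + 1) →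
      p^[n] w' ≠ v n → ∃ a ∈ Mset G v 0, a w = w' := by
    intro n w w' h1 h2 h3 h4
    rw [Function.iterate_succ_apply'] at h1 h3
    obtain ⟨σ, s1, s2, s3⟩ := exists_swap hh hch hl hc _ _ (h1.trans h3.symm)
    obtain ⟨a, a1, a2, a3⟩ := exists_transport hh hch hl hc n (σ w) w'
      (by rw [← comm_iter s1, s2])
    have nv : ∀ j x, p x = v (n + 1) → x ≠ v n → v j ≠ x := by
      rintro j x hx hxn rfl
      rw [hv] at hx
      have := hinj hx
      apply hxn
      congr 1
      omega
    refine ⟨a * σ, (hM0 _).2 ⟨fun u => by simp [s1, a1], ?_⟩, by simpa using a2⟩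
    rw [Equiv.Perm.mul_apply, s3, a3]
    · intro j
      rw [hvk]
      exact nv _ _ h3 h4
    · intro j
      rw [hvk]
      exact nv _ _ h1 h2
    · intro j
      rw [hvk]
      exact nv _ _ h3 h4
  have E2 : ∀ n w, p^[n + 1] w = v (n + 1) → p^[n] w ≠ v n →
      ∃ g ∈ Mset G v (n + 1), g (v 0) = w := by
    intro n w h1 h2
    obtain ⟨a, a1, a2, a3⟩ := exists_transport hh hch hl hc (n + 1) (v 0) w
      (by rw [hvk, h1])
    exact ⟨a, (hMn _ _).2 ⟨a1, by rw [a2]; exact ⟨h1, h2⟩⟩, a2⟩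
  refine ⟨?_, ?_, ?_, ?_⟩
  · intro g hg
    have hg' := (hM g).1 hg
    classical
    have hex := hg'.2
    refine ⟨Nat.find hex, ?_, ?_⟩
    · have hs := Nat.find_spec hex
      have hm := fun m => Nat.find_min hex (m := m)
      revert hs hm
      generalize Nat.find hex = n
      intro hs hm
      cases n with
      | zero => exact ⟨hg, hs⟩
      | succ n => exact ⟨hg, hs, hm n (by omega)⟩
    · intro n hn
      symm
      rw [Nat.find_eq_iff]
      cases n with
      | zero => exact ⟨hn.2, by simp⟩
      | succ n =>
        exact ⟨hn.2.1, fun m hm e => hn.2.2 (up g hg'.1 m n (by omega) e)⟩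
  · intro n g hg g' hg'
    have h1 := hsub _ _ hg
    have h2 := hsub _ _ hg'
    obtain ⟨a, ha, e⟩ : ∃ a ∈ Mset G v 0, a (g (v 0)) = g' (v 0) := by
      cases n with
      | zero => exact ⟨1, (hM0 _).2 (by simp), by simp [hg.2, hg'.2]⟩
      | succ n =>
        have x := (hMn _ _).1 hg
        have y := (hMn _ _).1 hg'
        exact E1 n _ _ x.2.1 x.2.2 y.2.1 y.2.2
    refine ⟨a, ha, (a * g)⁻¹ * g', same _ (hmul _ (hsub _ _ ha) _ h1) _ h2 (by simpa using e), ?_⟩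
    group
  · have key : ∀ n g, g ∈ Mset G v n → g⁻¹ ∈ Mset G v n := by
      intro n g hg
      have h1 := hinv _ (hsub _ _ hg)
      cases n with
      | zero => exact ⟨h1, by rw [Equiv.Perm.inv_eq_iff_eq, hg.2]⟩
      | succ n =>
        refine ⟨h1, by rw [Equiv.Perm.inv_eq_iff_eq, hg.2.1], fun e => hg.2.2 ?_⟩
        rw [Equiv.Perm.inv_eq_iff_eq] at e
        exact e.symm
    intro n
    ext g
    rw [Set.mem_inv]
    exact ⟨fun hg => by simpa using key n _ hg, key n g⟩
  · intro n hn
    obtain ⟨n, rfl⟩ : ∃ m, n = m + 1 := ⟨n - 1, by omega⟩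
    let S : Set V := {w | p^[n + 1] w = v (n + 1)} \ {w | p^[n] w = v n}
    have hS : S.ncard = (q - 1) * q ^ n := by
      rw [Set.ncard_diff _ (card_desc hch hl hc _ _).1, (card_desc hch hl hc _ _).2,
        (card_desc hch hl hc _ _).2, Nat.sub_mul, pow_succ, one_mul, mul_comm]
      intro w hw
      change p^[n + 1] w = v (n + 1)
      rw [Function.iterate_succ_apply', hw, hv]
    have hE : ∀ w : S, ∃ g ∈ Mset G v (n + 1), g (v 0) = w := fun w => E2 n w w.2.1 w.2.2
    choose γ hγ1 hγ2 using hE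
    let F : S → {s : Set (Equiv.Perm V) | ∃ g ∈ Mset G v (n + 1), s = (g * ·) '' Mset G v 0} :=
      fun w => ⟨_, γ w, hγ1 w, rfl⟩
    have hF : Function.Bijective F := by
      constructor
      · intro w w' e
        have e' : (γ w * ·) '' Mset G v 0 = (γ w' * ·) '' Mset G v 0 := congrArg Subtype.val e
        have h1 : γ w ∈ (γ w * ·) '' Mset G v 0 := ⟨1, (hM0 _).2 (by simp), by simp⟩
        rw [e'] at h1
        obtain ⟨a, ha, h2⟩ := h1
        apply Subtype.ext
        rw [← hγ2 w, ← hγ2 w', ← h2]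
        change (γ w' * a) (v 0) = _
        rw [Equiv.Perm.mul_apply, ha.2]
      · rintro ⟨s, g, hg, rfl⟩
        have x := (hMn _ _).1 hg
        let w : S := ⟨g (v 0), x.2.1, x.2.2⟩
        refine ⟨w, Subtype.ext ?_⟩
        change (γ w * ·) '' Mset G v 0 = (g * ·) '' Mset G v 0
        have mm : ∀ a ∈ Mset G v 0, ∀ b ∈ Mset G v 0, a * b ∈ Mset G v 0 := by
          intro a ha b hb
          exact ⟨hmul _ ha.1 _ hb.1, by rw [Equiv.Perm.mul_apply, hb.2, ha.2]⟩
        have e : γ w (v 0) = g (v 0) := hγ2 w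
        have g1 := hsub _ _ hg
        have g2 := hsub _ _ (hγ1 w)
        ext b
        constructor
        · rintro ⟨a, ha, rfl⟩
          exact ⟨_, mm _ (same _ g1 _ g2 e.symm) _ ha, by simp [mul_assoc]⟩
        · rintro ⟨a, ha, rfl⟩
          exact ⟨_, mm _ (same _ g2 _ g1 e) _ ha, by simp [mul_assoc]⟩
    rw [← Nat.card_congr (Equiv.ofBijective F hF), Nat.card_coe_set_eq, hS]
    simp

end Aux18

/-- for the `(q+1)`-regular tree with a fixed end (given by the ray `v`)
and `o = v 0`: every element of `M` lies in exactly one `M_n`; each `M_n` is a single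
`M₀`-double coset; `M_n⁻¹ = M_n`; and for `n ≥ 1` the number of left `M₀`-cosets in
`M_n` is `(q−1)q^{n−1}`. -/
theorem stmt_18 {V : Type*} (G : SimpleGraph V) (v : ℕ → V) (q : ℕ) (hq : 2 ≤ q)
    (hconn : G.Connected) (hac : G.IsAcyclic)
    (hreg : ∀ u : V, (G.neighborSet u).ncard = q + 1)
    (hinj : Function.Injective v) (hadj : ∀ n : ℕ, G.Adj (v n) (v (n + 1))) :
    (∀ g ∈ Mend G v, ∃! n : ℕ, g ∈ Mset G v n) ∧
    (∀ n : ℕ, ∀ g ∈ Mset G v n, ∀ g' ∈ Mset G v n,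
      ∃ a ∈ Mset G v 0, ∃ b ∈ Mset G v 0, g' = a * g * b) ∧
    (∀ n : ℕ, (Mset G v n)⁻¹ = Mset G v n) ∧
    (∀ n : ℕ, 1 ≤ n →
      Nat.card ↥{s : Set (Equiv.Perm V) | ∃ g ∈ Mset G v n, s = (g * ·) '' Mset G v 0} =
        (q - 1) * q ^ (n - 1)) := by
  obtain ⟨p, h, hh, hA, hv, hcomm⟩ := Aux18.exists_parent G v hconn hac hinj hadj
  have hf : ∀ u, {w | p w = u}.ncard = q := by
    intro u
    have e : G.neighborSet u = insert (p u) {w | p w = u} := by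
      ext w
      rw [SimpleGraph.mem_neighborSet, hA, Set.mem_insert_iff, Set.mem_setOf_eq]
      tauto
    have hfin : (G.neighborSet u).Finite := Set.finite_of_ncard_pos (by rw [hreg]; omega)
    have hfin2 : {w | p w = u}.Finite := hfin.subset (by rw [e]; exact Set.subset_insert _ _)
    have h1 := hreg u
    rw [e, Set.ncard_insert_of_notMem _ hfin2] at h1
    · omega
    · intro hm
      have h2 : p (p u) = u := hm
      have h3 := congrArg h h2
      rw [hh, hh] at h3
      omega
  obtain ⟨ch, l, hch, hl, hc⟩ := Aux18.exists_labels hq hf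
  refine Aux18.main G v q hq hinj p h ch l hh hch hl hc hv ?_
  intro g
  constructor
  · intro hg
    obtain ⟨N, hN⟩ := hg.2
    exact ⟨hcomm g hg, N, hN N le_rfl⟩
  · rintro ⟨hg, N, hN⟩
    refine ⟨fun a b => ?_, N, fun n hn => ?_⟩
    · rw [hA, hA, ← hg, ← hg, g.injective.eq_iff, g.injective.eq_iff]
    · induction n, hn using Nat.le_induction with
      | base => exact hN
      | succ m _ ih => rw [← hv, hg, ih]
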